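/- Let H be a Hopf k-algebra weakly acting on a k-algebra A and let f : H ⊗_k H → A be a k-linear map. The (a priori nonassociative, nonunital) algebra A #_f H is associative with 1#1 as identity element if and only if the following three conditions hold: (i) normality, f(h,1) = f(1,h) = ε(h)1_A for all h ∈ H; (ii) the cocycle condition, f(l^{(1)}, m^{(1)})^{h^{(1)}} f(h^{(2)}, l^{(2)} m^{(2)}) = f(h^{(1)}, l^{(1)}) f(h^{(2)} l^{(2)}, m) for all h, l, m ∈ H; (iii) the twisted module condition, (a^{l^{(1)}})^{h^{(1)}} f(h^{(2)}, l^{(2)}) = f(h^{(1)}, l^{(1)}) a^{h^{(2)} l^{(2)}} for all h, l ∈ H and a ∈ A. -/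

import Mathlib

open TensorProduct

noncomputable section CrossedProduct

variable (k A H : Type*) [CommRing k] [Ring A] [Algebra k A] [Ring H] [HopfAlgebra k H]

/-- A chosen "Sweedler representation" of the comultiplication of `H`:
`comul h = ∑_{i < n h} c₁ h i ⊗ c₂ h i` for every `h`. -/
def IsSweedlerRep (n : H → ℕ) (c₁ c₂ : H → ℕ → H) : Prop :=
  ∀ h : H, Coalgebra.comul (R := k) h = ∑ i ∈ Finset.range (n h), c₁ h i ⊗ₜ[k] c₂ h i

/-- `σ` is a weak action of `H` on `A`: `(ab)^h = a^{h⁽¹⁾} b^{h⁽²⁾}`, `1^h = ε(h)1`, `a^1 = a`. -/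
def IsWeakAction (n : H → ℕ) (c₁ c₂ : H → ℕ → H) (σ : H →ₗ[k] A →ₗ[k] A) : Prop :=
  (∀ (h : H) (a b : A),
      σ h (a * b) = ∑ i ∈ Finset.range (n h), σ (c₁ h i) a * σ (c₂ h i) b) ∧
  (∀ h : H, σ h (1 : A) = Coalgebra.counit (R := k) h • (1 : A)) ∧
  (∀ a : A, σ (1 : H) a = a)

/-- Condition (i): normality of the cocycle `f`. -/
def IsNormal (f : H →ₗ[k] H →ₗ[k] A) : Prop :=
  ∀ h : H, f h (1 : H) = Coalgebra.counit (R := k) h • (1 : A) ∧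
    f (1 : H) h = Coalgebra.counit (R := k) h • (1 : A)

/-- Condition (ii): the cocycle condition
`f(l⁽¹⁾,m⁽¹⁾)^{h⁽¹⁾} f(h⁽²⁾, l⁽²⁾m⁽²⁾) = f(h⁽¹⁾,l⁽¹⁾) f(h⁽²⁾l⁽²⁾, m)`. -/
def IsCocycle (n : H → ℕ) (c₁ c₂ : H → ℕ → H) (σ : H →ₗ[k] A →ₗ[k] A)
    (f : H →ₗ[k] H →ₗ[k] A) : Prop :=
  ∀ h l m : H,
    (∑ i ∈ Finset.range (n h), ∑ j ∈ Finset.range (n l), ∑ p ∈ Finset.range (n m),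
      σ (c₁ h i) (f (c₁ l j) (c₁ m p)) * f (c₂ h i) (c₂ l j * c₂ m p)) =
    ∑ i ∈ Finset.range (n h), ∑ j ∈ Finset.range (n l),
      f (c₁ h i) (c₁ l j) * f (c₂ h i * c₂ l j) m

/-- Condition (iii): the twisted module condition
`(a^{l⁽¹⁾})^{h⁽¹⁾} f(h⁽²⁾,l⁽²⁾) = f(h⁽¹⁾,l⁽¹⁾) a^{h⁽²⁾l⁽²⁾}`. -/
def IsTwistedModule (n : H → ℕ) (c₁ c₂ : H → ℕ → H) (σ : H →ₗ[k] A →ₗ[k] A)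
    (f : H →ₗ[k] H →ₗ[k] A) : Prop :=
  ∀ (h l : H) (a : A),
    (∑ i ∈ Finset.range (n h), ∑ j ∈ Finset.range (n l),
      σ (c₁ h i) (σ (c₁ l j) a) * f (c₂ h i) (c₂ l j)) =
    ∑ i ∈ Finset.range (n h), ∑ j ∈ Finset.range (n l),
      f (c₁ h i) (c₁ l j) * σ (c₂ h i * c₂ l j) a

/-- `finv` is the convolution inverse of `f`:
`f(h⁽¹⁾,l⁽¹⁾) f⁻¹(h⁽²⁾,l⁽²⁾) = f⁻¹(h⁽¹⁾,l⁽¹⁾) f(h⁽²⁾,l⁽²⁾) = ε(h)ε(l)1_A`. -/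
def IsConvInverse (n : H → ℕ) (c₁ c₂ : H → ℕ → H) (f finv : H →ₗ[k] H →ₗ[k] A) : Prop :=
  ∀ h l : H,
    (∑ i ∈ Finset.range (n h), ∑ j ∈ Finset.range (n l),
        f (c₁ h i) (c₁ l j) * finv (c₂ h i) (c₂ l j) =
      (Coalgebra.counit (R := k) h * Coalgebra.counit (R := k) l) • (1 : A)) ∧
    (∑ i ∈ Finset.range (n h), ∑ j ∈ Finset.range (n l),
        finv (c₁ h i) (c₁ l j) * f (c₂ h i) (c₂ l j) =
      (Coalgebra.counit (R := k) h * Coalgebra.counit (R := k) l) • (1 : A))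

/-- The multiplication of `A #_f H` as a bilinear map on `A ⊗[k] H`:
`(a # h)(b # l) = a b^{h⁽¹⁾} f(h⁽²⁾, l⁽¹⁾) # h⁽³⁾ l⁽²⁾`. -/
def crossedMul (σ : H →ₗ[k] A →ₗ[k] A) (f : H →ₗ[k] H →ₗ[k] A) :
    (A ⊗[k] H) →ₗ[k] (A ⊗[k] H) →ₗ[k] (A ⊗[k] H) :=
  TensorProduct.lift
    (((LinearMap.llcomp k (A ⊗[k] H) (A ⊗[k] H) (A ⊗[k] H)).comp
        (TensorProduct.curry
          ((LinearMap.rTensor H (LinearMap.mul' k A)) ∘ₗ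
            (TensorProduct.assoc k A A H).symm.toLinearMap))).compl₂
      (TensorProduct.curry
        ((LinearMap.rTensor H (LinearMap.mul' k A)) ∘ₗ
         (TensorProduct.map
            (TensorProduct.map (TensorProduct.lift σ) (TensorProduct.lift f))
            (LinearMap.mul' k H)) ∘ₗ
         (LinearMap.rTensor (H ⊗[k] H)
            (TensorProduct.tensorTensorTensorComm k H H A H).toLinearMap) ∘ₗ
         (TensorProduct.tensorTensorTensorComm k (H ⊗[k] H) H (A ⊗[k] H) H).toLinearMap ∘ₗ
         (TensorProduct.map
            ((LinearMap.rTensor H (Coalgebra.comul (R := k))) ∘ₗ (Coalgebra.comul (R := k)))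
            ((TensorProduct.assoc k A H H).symm.toLinearMap ∘ₗ
              (LinearMap.lTensor A (Coalgebra.comul (R := k))))))))

/-- The unit `1 # 1` of the crossed product. -/
def oneE : A ⊗[k] H := (1 : A) ⊗ₜ[k] (1 : H)

/-- The map `γ : H → A #_f H`, `γ(h) = 1 # h`. -/
def gam : H →ₗ[k] A ⊗[k] H := TensorProduct.mk k A H 1

/-- The map `h ↦ f⁻¹(S(h⁽²⁾), h⁽³⁾) # S(h⁽¹⁾)`, the convolution inverse of `γ`. -/
def gammaInv (finv : H →ₗ[k] H →ₗ[k] A) : H →ₗ[k] A ⊗[k] H :=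
  (TensorProduct.comm k H A).toLinearMap ∘ₗ
    (TensorProduct.map (HopfAlgebra.antipode (R := k))
      ((TensorProduct.lift finv) ∘ₗ (LinearMap.rTensor H (HopfAlgebra.antipode (R := k))))) ∘ₗ
    (LinearMap.lTensor H (Coalgebra.comul (R := k))) ∘ₗ (Coalgebra.comul (R := k))

/-- The canonical coaction `ν = id_A ⊗ Δ : A #_f H → (A #_f H) ⊗ H`. -/
def nuE : (A ⊗[k] H) →ₗ[k] (A ⊗[k] H) ⊗[k] H :=
  (TensorProduct.assoc k A H H).symm.toLinearMap ∘ₗ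
    (LinearMap.lTensor A (Coalgebra.comul (R := k)))

/-- Convolution product on `Hom_k(H, A #_f H)`: `(u * v)(h) = u(h⁽¹⁾) v(h⁽²⁾)`. -/
def convMul (σ : H →ₗ[k] A →ₗ[k] A) (f : H →ₗ[k] H →ₗ[k] A)
    (u v : H →ₗ[k] A ⊗[k] H) : H →ₗ[k] A ⊗[k] H :=
  (TensorProduct.lift (crossedMul k A H σ f)) ∘ₗ (TensorProduct.map u v) ∘ₗ
    (Coalgebra.comul (R := k))

/-- The unit of the convolution algebra `Hom_k(H, A #_f H)`: `h ↦ ε(h) 1_E`. -/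
def convOne : H →ₗ[k] A ⊗[k] H :=
  (LinearMap.toSpanSingleton k (A ⊗[k] H) (oneE k A H)) ∘ₗ (Coalgebra.counit (R := k))

/-- Sum over iterated (right-nested) Sweedler components:
`swSum n c₁ c₂ r h F = ∑ F (h⁽¹⁾, …, h⁽ʳ⁺¹⁾)`. -/
def swSum {M : Type*} [AddCommMonoid M] (n : H → ℕ) (c₁ c₂ : H → ℕ → H) :
    (r : ℕ) → H → ((Fin (r + 1) → H) → M) → M
  | 0, h, F => F (fun _ => h)
  | (r + 1), h, F =>
      ∑ i ∈ Finset.range (n h), swSum n c₁ c₂ r (c₂ h i) (fun g => F (Fin.cons (c₁ h i) g))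

/-- The product of a list of elements of the crossed product. -/
def prodE (σ : H →ₗ[k] A →ₗ[k] A) (f : H →ₗ[k] H →ₗ[k] A) :
    List (A ⊗[k] H) → A ⊗[k] H
  | [] => oneE k A H
  | x :: L => crossedMul k A H σ f x (prodE σ f L)

end CrossedProduct

/-!
A weak action `σ` and the map `f` live in convolution algebras `Hom(C, A)` of coalgebras `C`. Write
`u ⋆ φ` for the map `c ↦ u(c⁽¹⁾) # φ(c⁽²⁾)`, where `u : C → A` is linear and `φ : C → H` is a
coalgebra map. Pure tensors are values of such maps, and the product of a value of `u ⋆ φ` with a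
value of `v ⋆ ψ` is again a value of some `w ⋆ (φψ)`, with `w` an explicit convolution product.
So both ways of bracketing `(a # h)(b # l)(c # m)` have the form
`a b^{h⁽¹⁾} X(h⁽²⁾, l⁽¹⁾, m⁽¹⁾) # h⁽³⁾ l⁽²⁾ m⁽²⁾`. Since `id ⊗ ε` recovers `u` from `u ⋆ φ`,
associativity amounts to the equality of the two maps `X` for every `c`. For `c = 1` this is the
cocycle condition; given the latter, setting `m = 1` turns it into the twisted module condition.
The same cancellation on products with `1 # 1` yields normality.
-/

noncomputable section

open Coalgebra WithConv

namespace CrossedProduct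

section Convolution

variable {k A B C D : Type*} [CommSemiring k] [Semiring A] [Algebra k A] [Semiring B]
  [Algebra k B] [AddCommMonoid C] [Module k C] [Coalgebra k C] [AddCommMonoid D] [Module k D]
  [Coalgebra k D]

/-- Precomposition with a coalgebra map, as a homomorphism of convolution algebras. -/
def convComap (φ : C →ₗc[k] D) : WithConv (D →ₗ[k] A) →ₐ[k] WithConv (C →ₗ[k] A) :=
  AlgHom.ofLinearMap
    { toFun u := toConv (u.ofConv ∘ₗ φ.toLinearMap)
      map_add' _ _ := by ext; simp
      map_smul' _ _ := by ext; simp }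
    (by ext; simp)
    (fun u v => WithConv.ext (LinearMap.convMul_comp_coalgHom_distrib u v φ))

@[simp]
lemma convComap_apply (φ : C →ₗc[k] D) (u : WithConv (D →ₗ[k] A)) (c : C) :
    convComap φ u c = u (φ c) := rfl

/-- Postcomposition with an algebra map, as a homomorphism of convolution algebras. -/
def convMap (g : A →ₐ[k] B) : WithConv (C →ₗ[k] A) →ₐ[k] WithConv (C →ₗ[k] B) :=
  AlgHom.ofLinearMap
    { toFun u := toConv (g.toLinearMap ∘ₗ u.ofConv)
      map_add' _ _ := by ext; simp
      map_smul' _ _ := by ext; simp }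
    (by ext; simp)
    (fun u v => WithConv.ext (LinearMap.algHom_comp_convMul_distrib g u v))

@[simp]
lemma convMap_apply (g : A →ₐ[k] B) (u : WithConv (C →ₗ[k] A)) (c : C) :
    convMap g u c = g (u c) := rfl

lemma convMap_convComap (g : A →ₐ[k] B) (φ : C →ₗc[k] D) (u : WithConv (D →ₗ[k] A)) :
    convMap g (convComap φ u) = convComap φ (convMap g u) := rfl

variable (k C) in
/-- The map `c ↦ ε(c)a`, which represents the scalar `a` in the convolution algebra. -/
def convConst : A →ₗ[k] WithConv (C →ₗ[k] A) where
  toFun a := toConv (LinearMap.toSpanSingleton k A a ∘ₗ counit)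
  map_add' _ _ := by ext; simp
  map_smul' _ _ := by ext; simpa using smul_comm _ _ _

@[simp]
lemma convConst_apply (a : A) (c : C) : convConst k C a c = counit (R := k) c • a := rfl

lemma convConst_one : convConst k C (1 : A) = 1 := by
  ext c
  simp [Algebra.algebraMap_eq_smul_one]

lemma convComap_convConst (φ : C →ₗc[k] D) (a : A) :
    convComap φ (convConst k D a) = convConst k C a := by
  ext c
  simp

lemma convMap_convConst (g : A →ₐ[k] B) (a : A) :
    convMap g (convConst k C a) = convConst k C (g a) := by
  ext c
  simp

lemma convConst_mul_apply (a : A) (u : WithConv (C →ₗ[k] A)) (c : C) :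
    (convConst k C a * u) c = a * u c := by
  conv_rhs => rw [← sum_counit_smul (ℛ k c)]
  simp [(ℛ k c).convMul_apply, Finset.mul_sum]

/-- The decomposition of `Δ(c ⊗ d)` obtained from decompositions of `Δ(c)` and `Δ(d)`. -/
@[simps]
def tmulRepr {ι κ : Type*} {c : C} {d : D} (rc : Coalgebra.Repr k c ι)
    (rd : Coalgebra.Repr k d κ) : Coalgebra.Repr k (c ⊗ₜ[k] d) (ι × κ) where
  index := rc.index ×ˢ rd.index
  left i := rc.left i.1 ⊗ₜ rd.left i.2
  right i := rc.right i.1 ⊗ₜ rd.right i.2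
  eq := by
    rw [TensorProduct.comul_tmul, ← rc.eq, ← rd.eq, Finset.sum_product_right]
    simp [sum_tmul, tmul_sum]

lemma convMul_tmul {ι κ : Type*} {c : C} {d : D} (rc : Coalgebra.Repr k c ι)
    (rd : Coalgebra.Repr k d κ) (u v : WithConv (C ⊗[k] D →ₗ[k] A)) :
    (u * v) (c ⊗ₜ d) = ∑ i ∈ rc.index, ∑ j ∈ rd.index,
      u (rc.left i ⊗ₜ rd.left j) * v (rc.right i ⊗ₜ rd.right j) := by
  rw [(tmulRepr rc rd).convMul_apply]
  exact Finset.sum_product ..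

variable (k C D) in
/-- The projection `c ⊗ d ↦ ε(d)c`. -/
def tensorFst : C ⊗[k] D →ₗc[k] C :=
  CoalgHom.comp (Coalgebra.TensorProduct.rid k k C)
    (Coalgebra.TensorProduct.map (.id k C) (counitCoalgHom k D))

@[simp]
lemma tensorFst_tmul (c : C) (d : D) : tensorFst k C D (c ⊗ₜ d) = counit (R := k) d • c := rfl

lemma convComap_tensorFst_mul_tmul (u : WithConv (C →ₗ[k] A)) (g : WithConv (C ⊗[k] D →ₗ[k] A))
    (c : C) (d : D) :
    (convComap (tensorFst k C D) u * g) (c ⊗ₜ d) =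
      (u * toConv ((TensorProduct.curry g.ofConv).flip d)) c := by
  rw [convMul_tmul (ℛ k c) (ℛ k d), (ℛ k c).convMul_apply]
  refine Finset.sum_congr rfl fun i _ => ?_
  conv_rhs => rw [← sum_counit_smul (ℛ k d)]
  simp [Finset.mul_sum]

section Bialgebra

open Bialgebra

variable {H : Type*} [Semiring H] [Bialgebra k H]

variable (k C H) in
/-- The inclusion `c ↦ c ⊗ 1`. -/
def tmulOne : C →ₗc[k] C ⊗[k] H :=
  (Coalgebra.TensorProduct.map (.id k C) (unitBialgHom k H : k →ₗc[k] H)).comp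
    (Coalgebra.TensorProduct.rid k k C).symm

@[simp]
lemma tmulOne_apply (c : C) : tmulOne k C H c = c ⊗ₜ 1 := by
  simp [tmulOne]

variable (k C H) in
/-- The inclusion `c ↦ 1 ⊗ c`. -/
def oneTmul : C →ₗc[k] H ⊗[k] C :=
  (Coalgebra.TensorProduct.map (unitBialgHom k H : k →ₗc[k] H) (.id k C)).comp
    (Coalgebra.TensorProduct.lid k C).symm

@[simp]
lemma oneTmul_apply (c : C) : oneTmul k C H c = 1 ⊗ₜ c := by
  simp [oneTmul]

end Bialgebra

end Convolution

section Twist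

variable {k A B C D : Type*} [CommSemiring k] [AddCommMonoid C] [Module k C] [AddCommMonoid D]
  [Module k D] [Semiring B] [Algebra k B]

section Module

variable [AddCommMonoid A] [Module k A]

/-- The orbit map `c ↦ σ(c, a)` of a bilinear pairing `σ`, linearly in `a`. For the pairing
`σ(h, a) = a^h` this is the map written `h ↦ a^h`. -/
def orbit (σ : C →ₗ[k] A →ₗ[k] B) : A →ₗ[k] WithConv (C →ₗ[k] B) :=
  (WithConv.linearEquiv k (C →ₗ[k] B)).symm.toLinearMap ∘ₗ σ.flip

@[simp]
lemma orbit_apply (σ : C →ₗ[k] A →ₗ[k] B) (a : A) (c : C) : orbit σ a c = σ c a := rfl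

/-- The map `c ⊗ d ↦ σ(c, v(d))`; for the pairing `σ(h, a) = a^h` it is `h ⊗ d ↦ v(d)^h`. -/
def twist (σ : C →ₗ[k] A →ₗ[k] B) (v : WithConv (D →ₗ[k] A)) : WithConv (C ⊗[k] D →ₗ[k] B) :=
  toConv (TensorProduct.lift (σ.compl₂ v.ofConv))

@[simp]
lemma twist_tmul (σ : C →ₗ[k] A →ₗ[k] B) (v : WithConv (D →ₗ[k] A)) (c : C) (d : D) :
    twist σ v (c ⊗ₜ d) = σ c (v d) := rfl

lemma twist_mul_tmul [Coalgebra k C] [Coalgebra k D] {ι : Type*} (σ : C →ₗ[k] A →ₗ[k] B)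
    (v : WithConv (D →ₗ[k] A)) (g : WithConv (C ⊗[k] D →ₗ[k] B)) (c : C) {d : D}
    (r : Coalgebra.Repr k d ι) :
    (twist σ v * g) (c ⊗ₜ d) = ∑ j ∈ r.index,
      (convComap (tensorFst k C D) (orbit σ (v (r.left j))) * g) (c ⊗ₜ r.right j) := by
  simp_rw [convComap_tensorFst_mul_tmul, (ℛ k c).convMul_apply, convMul_tmul (ℛ k c) r]
  exact Finset.sum_comm

lemma convMap_twist [Coalgebra k C] [Coalgebra k D] {E : Type*} [Semiring E] [Algebra k E]
    (g : B →ₐ[k] E) (σ : C →ₗ[k] A →ₗ[k] B) (v : WithConv (D →ₗ[k] A)) :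
    convMap g (twist σ v) = twist (σ.compr₂ g.toLinearMap) v := by
  ext
  rfl

end Module

variable [Semiring A] [Algebra k A] [Coalgebra k C] [Coalgebra k D]

lemma twist_convConst (σ : C →ₗ[k] A →ₗ[k] B) (a : A) :
    twist σ (convConst k D a) = convComap (tensorFst k C D) (orbit σ a) := by
  ext c d
  simp

lemma twist_mul {σ : C →ₗ[k] A →ₗ[k] B} (hσ : ∀ a b, orbit σ (a * b) = orbit σ a * orbit σ b)
    (u v : WithConv (D →ₗ[k] A)) : twist σ (u * v) = twist σ u * twist σ v := by
  ext c d
  have h_mul (a b : A) : σ c (a * b) = ∑ i ∈ (ℛ k c).index,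
      σ ((ℛ k c).left i) a * σ ((ℛ k c).right i) b := by
    rw [← orbit_apply, hσ, (ℛ k c).convMul_apply]
    rfl
  change twist σ (u * v) (c ⊗ₜ d) = (twist σ u * twist σ v) (c ⊗ₜ d)
  rw [convMul_tmul (ℛ k c) (ℛ k d), twist_tmul, (ℛ k d).convMul_apply]
  simp only [map_sum, h_mul, twist_tmul]
  exact Finset.sum_comm

end Twist

section Smash

variable {k A H C D : Type*} [CommSemiring k] [Semiring A] [Algebra k A] [Semiring H]
  [Bialgebra k H] [AddCommMonoid C] [Module k C] [Coalgebra k C] [AddCommMonoid D] [Module k D]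
  [Coalgebra k D]

/-- The map `c ↦ u(c⁽¹⁾) # φ(c⁽²⁾)`, linearly in `u`. -/
def smash (φ : C →ₗc[k] H) : WithConv (C →ₗ[k] A) →ₗ[k] WithConv (C →ₗ[k] A ⊗[k] H) :=
  LinearMap.mulRight k (toConv (Algebra.TensorProduct.includeRight.toLinearMap ∘ₗ φ.toLinearMap)) ∘ₗ
    (convMap Algebra.TensorProduct.includeLeft).toLinearMap

lemma smash_def (φ : C →ₗc[k] H) (u : WithConv (C →ₗ[k] A)) :
    smash φ u = convMap Algebra.TensorProduct.includeLeft u *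
      toConv (Algebra.TensorProduct.includeRight.toLinearMap ∘ₗ φ.toLinearMap) := rfl

lemma smash_apply {ι : Type*} (φ : C →ₗc[k] H) (u : WithConv (C →ₗ[k] A)) {c : C}
    (r : Coalgebra.Repr k c ι) :
    smash φ u c = ∑ i ∈ r.index, u (r.left i) ⊗ₜ[k] φ (r.right i) := by
  simp [smash_def, r.convMul_apply]

lemma smash_mul (φ : C →ₗc[k] H) (u v : WithConv (C →ₗ[k] A)) :
    smash φ (u * v) = convMap Algebra.TensorProduct.includeLeft u * smash φ v := by
  simp [smash_def, mul_assoc]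

lemma convComap_smash (θ : C →ₗc[k] D) (φ : D →ₗc[k] H) (u : WithConv (D →ₗ[k] A)) :
    convComap θ (smash φ u) = smash (φ.comp θ) (convComap θ u) := by
  rw [smash_def, map_mul]
  rfl

lemma smash_id_convConst (a : A) (h : H) : smash (.id k H) (convConst k H a) h = a ⊗ₜ h := by
  rw [smash_def, convMap_convConst, convConst_mul_apply]
  simp

lemma smash_convComap_tensorFst_mul_tmul {ι : Type*} (φ : C ⊗[k] D →ₗc[k] H)
    (u : WithConv (C →ₗ[k] A)) (g : WithConv (C ⊗[k] D →ₗ[k] A)) {c : C}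
    (r : Coalgebra.Repr k c ι) (d : D) :
    smash φ (convComap (tensorFst k C D) u * g) (c ⊗ₜ d) =
      ∑ i ∈ r.index, (u (r.left i) ⊗ₜ 1) * smash φ g (r.right i ⊗ₜ d) := by
  rw [smash_mul, convMap_convComap, convComap_tensorFst_mul_tmul, r.convMul_apply]
  rfl

lemma smash_twist_mul_tmul {ι M : Type*} [AddCommMonoid M] [Module k M]
    (φ : C ⊗[k] D →ₗc[k] H) (σ : C →ₗ[k] M →ₗ[k] A) (v : WithConv (D →ₗ[k] M))
    (g : WithConv (C ⊗[k] D →ₗ[k] A)) (c : C) {d : D} (r : Coalgebra.Repr k d ι) :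
    smash φ (twist σ v * g) (c ⊗ₜ d) = ∑ j ∈ r.index,
      smash φ (convComap (tensorFst k C D) (orbit σ (v (r.left j))) * g) (c ⊗ₜ r.right j) := by
  simp_rw [smash_mul, convMap_twist]
  exact twist_mul_tmul _ v (smash φ g) c r

-- Applying the algebra map `id ⊗ ε` to `u(c⁽¹⁾) # φ(c⁽²⁾)` gives back `u(c)`.
lemma smash_injective (φ : C →ₗc[k] H) :
    Function.Injective (smash φ : WithConv (C →ₗ[k] A) → WithConv (C →ₗ[k] A ⊗[k] H)) := by
  let g : A ⊗[k] H →ₐ[k] A := (Algebra.TensorProduct.rid k k A).toAlgHom.comp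
    (Algebra.TensorProduct.map (.id k A) (Bialgebra.counitAlgHom k H))
  refine Function.LeftInverse.injective (g := convMap g) fun u => ?_
  have h_left : convMap g (convMap Algebra.TensorProduct.includeLeft u) = u := by
    ext
    simp [g]
  have h_right : convMap g (toConv (Algebra.TensorProduct.includeRight.toLinearMap ∘ₗ
      φ.toLinearMap)) = 1 := by
    ext
    simp [g, Algebra.algebraMap_eq_smul_one]
  rw [smash_def, map_mul, h_left, h_right, mul_one]

end Smash

section CrossedMul

open Bialgebra

variable {k A H C D : Type*} [CommSemiring k] [Semiring A] [Algebra k A] [Semiring H]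
  [Bialgebra k H] [AddCommMonoid C] [Module k C] [Coalgebra k C] [AddCommMonoid D] [Module k D]
  [Coalgebra k D]

/-- Weak actions `σ(h, a) = a^h` of a bialgebra. That `h` acts on products through `Δ(h)` and on `1`
through `ε(h)` says that `a ↦ (h ↦ a^h)` is multiplicative and unital for convolution. -/
structure WeakAction (σ : H →ₗ[k] A →ₗ[k] A) : Prop where
  orbit_mul (a b : A) : orbit σ (a * b) = orbit σ a * orbit σ b
  orbit_one : orbit σ (1 : A) = 1
  one_apply (a : A) : σ 1 a = a

/-- Normality `f(h, 1) = f(1, h) = ε(h)1`; the `1` below is the unit of the convolution algebra of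
`H`, that is `h ↦ ε(h)1`. -/
def Normal (f : WithConv (H ⊗[k] H →ₗ[k] A)) : Prop :=
  convComap (tmulOne k H H) f = 1 ∧ convComap (oneTmul k H H) f = 1

variable (k H) in
/-- The coalgebra map `(h ⊗ l) ⊗ m ↦ hl ⊗ m`. -/
def mulTensorId : (H ⊗[k] H) ⊗[k] H →ₗc[k] H ⊗[k] H :=
  Coalgebra.TensorProduct.map (mulCoalgHom k H) (.id k H)

variable (k H) in
/-- The coalgebra map `h ⊗ (l ⊗ m) ↦ h ⊗ lm`. -/
def idTensorMul : H ⊗[k] (H ⊗[k] H) →ₗc[k] H ⊗[k] H :=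
  Coalgebra.TensorProduct.map (.id k H) (mulCoalgHom k H)

variable (σ : H →ₗ[k] A →ₗ[k] A) (f : WithConv (H ⊗[k] H →ₗ[k] A))

/-- The cocycle condition `f(l⁽¹⁾, m⁽¹⁾)^{h⁽¹⁾} f(h⁽²⁾, l⁽²⁾m⁽²⁾) = f(h⁽¹⁾, l⁽¹⁾) f(h⁽²⁾l⁽²⁾, m)`,
as an identity in the convolution algebra of `(H ⊗ H) ⊗ H`. -/
def Cocycle : Prop :=
  convComap (Coalgebra.TensorProduct.assoc k k H H H).toCoalgHom
      (twist σ f * convComap (idTensorMul k H) f) =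
    convComap (tensorFst k (H ⊗[k] H) H) f * convComap (mulTensorId k H) f

/-- The twisted module condition `(a^{l⁽¹⁾})^{h⁽¹⁾} f(h⁽²⁾, l⁽²⁾) = f(h⁽¹⁾, l⁽¹⁾) a^{h⁽²⁾l⁽²⁾}`,
as an identity in the convolution algebra of `H ⊗ H`. -/
def TwistedModule : Prop :=
  ∀ a : A, twist σ (orbit σ a) * f = f * convComap (mulCoalgHom k H) (orbit σ a)

/-- The multiplication `(a # h)(b # l) = a b^{h⁽¹⁾} f(h⁽²⁾, l⁽¹⁾) # h⁽³⁾ l⁽²⁾` on `A ⊗ H`, where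
`f` is an element of the convolution algebra of `H ⊗ H` and `σ(h, a) = a^h`. -/
def mul : A ⊗[k] H →ₗ[k] A ⊗[k] H →ₗ[k] A ⊗[k] H :=
  curry (TensorProduct.lift (TensorProduct.lift (LinearMap.mk₂ k
      (fun a b => (smash (mulCoalgHom k H)
        (convConst k _ a * (convComap (tensorFst k H H) (orbit σ b) * f))).ofConv)
      (fun _ _ _ => by simp [add_mul]) (fun _ _ _ => by simp)
      (fun _ _ _ => by simp [add_mul, mul_add]) (fun _ _ _ => by simp))) ∘ₗ
    (tensorTensorTensorComm k A H A H).toLinearMap)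

lemma mul_tmul_tmul (a b : A) (h l : H) :
    mul σ f (a ⊗ₜ h) (b ⊗ₜ l) = smash (mulCoalgHom k H)
      (convConst k _ a * (convComap (tensorFst k H H) (orbit σ b) * f)) (h ⊗ₜ l) := rfl

lemma mul_smash_smash (φ : C →ₗc[k] H) (ψ : D →ₗc[k] H) (u : WithConv (C →ₗ[k] A))
    (v : WithConv (D →ₗ[k] A)) (c : C) (d : D) :
    mul σ f (smash φ u c) (smash ψ v d) =
      smash ((mulCoalgHom k H).comp (Coalgebra.TensorProduct.map φ ψ))
        (convComap (tensorFst k C D) u * (twist (σ ∘ₗ φ.toLinearMap) v *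
          convComap (Coalgebra.TensorProduct.map φ ψ) f)) (c ⊗ₜ d) := by
  set Φ := Coalgebra.TensorProduct.map φ ψ
  have h_pure (a b : A) (c : C) (d : D) : mul σ f (a ⊗ₜ φ c) (b ⊗ₜ ψ d) =
      a ⊗ₜ 1 * smash ((mulCoalgHom k H).comp Φ)
        (convComap (tensorFst k C D) (orbit (σ ∘ₗ φ.toLinearMap) b) * convComap Φ f) (c ⊗ₜ d) := by
    have h_fst : convComap Φ (convComap (tensorFst k H H) (orbit σ b)) =
        convComap (tensorFst k C D) (orbit (σ ∘ₗ φ.toLinearMap) b) := by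
      ext c d
      simp [Φ]
    rw [mul_tmul_tmul, smash_mul, convMap_convConst, convConst_mul_apply, ← h_fst, ← map_mul,
      ← convComap_smash]
    rfl
  rw [smash_convComap_tensorFst_mul_tmul _ _ _ (ℛ k c), smash_apply φ u (ℛ k c),
    smash_apply ψ v (ℛ k d)]
  simp only [map_sum, LinearMap.sum_apply, h_pure, smash_twist_mul_tmul _ _ _ _ _ (ℛ k d),
    Finset.mul_sum]
  exact Finset.sum_comm

/-- The map `L` on `(H ⊗ H) ⊗ H` for which
`((a # h)(b # l))(c # m) = a b^{h⁽¹⁾} L(h⁽²⁾, l⁽¹⁾, m⁽¹⁾) # h⁽³⁾ l⁽²⁾ m⁽²⁾`. -/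
def assocLeft (c : A) : WithConv ((H ⊗[k] H) ⊗[k] H →ₗ[k] A) :=
  convComap (tensorFst k (H ⊗[k] H) H) (f * convComap (mulCoalgHom k H) (orbit σ c)) *
    convComap (mulTensorId k H) f

/-- The map `R` on `(H ⊗ H) ⊗ H` for which
`(a # h)((b # l)(c # m)) = a b^{h⁽¹⁾} R(h⁽²⁾, l⁽¹⁾, m⁽¹⁾) # h⁽³⁾ l⁽²⁾ m⁽²⁾`. -/
def assocRight (c : A) : WithConv ((H ⊗[k] H) ⊗[k] H →ₗ[k] A) :=
  convComap (Coalgebra.TensorProduct.assoc k k H H H).toCoalgHom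
    (twist σ (convComap (tensorFst k H H) (orbit σ c) * f) * convComap (idTensorMul k H) f)

variable (k H) in
/-- The coalgebra map `(h ⊗ l) ⊗ m ↦ hlm`. -/
def mulThree : (H ⊗[k] H) ⊗[k] H →ₗc[k] H := (mulCoalgHom k H).comp (mulTensorId k H)

lemma mulThree_eq_comp_assoc : mulThree k H = (mulCoalgHom k H).comp
    ((idTensorMul k H).comp (Coalgebra.TensorProduct.assoc k k H H H).toCoalgHom) := by
  apply CoalgHom.coe_linearMap_injective
  ext
  simp [mulThree, mulTensorId, idTensorMul, mul_assoc]

lemma mul_mul_tmul (a b c : A) (h l m : H) :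
    mul σ f (mul σ f (a ⊗ₜ h) (b ⊗ₜ l)) (c ⊗ₜ m) = smash (mulThree k H)
      (convConst k _ a * convComap (tensorFst k _ H) (convComap (tensorFst k H H) (orbit σ b)) *
        assocLeft σ f c) ((h ⊗ₜ l) ⊗ₜ m) := by
  have h_twist : twist (σ ∘ₗ (mulCoalgHom k H).toLinearMap) (convConst k H c) =
      convComap (tensorFst k (H ⊗[k] H) H) (convComap (mulCoalgHom k H) (orbit σ c)) :=
    twist_convConst _ c
  rw [← smash_id_convConst c m, mul_tmul_tmul, mul_smash_smash, h_twist]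
  simp only [map_mul, convComap_convConst, assocLeft, mul_assoc]
  rfl

variable {σ f}

lemma mul_tmul_mul (hσ : WeakAction σ) (a b c : A) (h l m : H) :
    mul σ f (a ⊗ₜ h) (mul σ f (b ⊗ₜ l) (c ⊗ₜ m)) = smash (mulThree k H)
      (convConst k _ a * convComap (tensorFst k _ H) (convComap (tensorFst k H H) (orbit σ b)) *
        assocRight σ f c) ((h ⊗ₜ l) ⊗ₜ m) := by
  have h_fst : convComap (tensorFst k _ H) (convComap (tensorFst k H H) (orbit σ b)) =
      convComap (Coalgebra.TensorProduct.assoc k k H H H).toCoalgHom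
        (convComap (tensorFst k H (H ⊗[k] H)) (orbit σ b)) := by
    ext
    simp [mul_smul]
  have h_twist : twist (σ ∘ₗ (CoalgHom.id k H).toLinearMap)
      (convConst k _ b * (convComap (tensorFst k H H) (orbit σ c) * f)) =
      convComap (tensorFst k H (H ⊗[k] H)) (orbit σ b) *
        twist σ (convComap (tensorFst k H H) (orbit σ c) * f) := by
    rw [← twist_convConst σ b, ← twist_mul hσ.orbit_mul]
    rfl
  rw [h_fst, assocRight, mulThree_eq_comp_assoc, ← CoalgHom.comp_assoc,
    ← convComap_convConst (Coalgebra.TensorProduct.assoc k k H H H).toCoalgHom, ← map_mul,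
    ← map_mul, ← convComap_smash, ← smash_id_convConst a h, mul_tmul_tmul, mul_smash_smash,
    h_twist, convComap_convConst, convComap_apply]
  simp only [mul_assoc]
  rfl

lemma assocLeft_one (hσ : WeakAction σ) : assocLeft σ f 1 =
    convComap (tensorFst k (H ⊗[k] H) H) f * convComap (mulTensorId k H) f := by
  rw [assocLeft, hσ.orbit_one, map_one, mul_one]

lemma assocRight_one (hσ : WeakAction σ) : assocRight σ f 1 =
    convComap (Coalgebra.TensorProduct.assoc k k H H H).toCoalgHom
      (twist σ f * convComap (idTensorMul k H) f) := by
  rw [assocRight, hσ.orbit_one, map_one, one_mul]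

lemma assocRight_of_cocycle (hσ : WeakAction σ) (hf : Cocycle σ f) (c : A) :
    assocRight σ f c = convComap (tensorFst k (H ⊗[k] H) H) (twist σ (orbit σ c) * f) *
      convComap (mulTensorId k H) f := by
  have h_twist : convComap (Coalgebra.TensorProduct.assoc k k H H H).toCoalgHom
      (twist σ (convComap (tensorFst k H H) (orbit σ c))) =
      convComap (tensorFst k (H ⊗[k] H) H) (twist σ (orbit σ c)) := by
    ext
    simp
  rw [assocRight, twist_mul hσ.orbit_mul, mul_assoc, map_mul, h_twist, hf, map_mul, mul_assoc]

lemma forall_assocLeft_eq_assocRight_iff (hσ : WeakAction σ) (hf : Normal f) :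
    (∀ c, assocLeft σ f c = assocRight σ f c) ↔ Cocycle σ f ∧ TwistedModule σ f := by
  constructor
  · intro h_assoc
    have h_cocycle : Cocycle σ f := by
      rw [Cocycle, ← assocRight_one hσ, ← assocLeft_one hσ, h_assoc]
    refine ⟨h_cocycle, fun c => ?_⟩
    have h_fst (u : WithConv (H ⊗[k] H →ₗ[k] A)) :
        convComap (tmulOne k (H ⊗[k] H) H) (convComap (tensorFst k (H ⊗[k] H) H) u) = u := by
      ext
      simp
    have h_mul : convComap (tmulOne k (H ⊗[k] H) H) (convComap (mulTensorId k H) f) = 1 := by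
      rw [← map_one (convComap (mulCoalgHom k H)), ← hf.1]
      ext
      simp [mulTensorId]
    have h_tmul_one := congrArg (convComap (tmulOne k (H ⊗[k] H) H)) (h_assoc c)
    rw [assocLeft, assocRight_of_cocycle hσ h_cocycle, map_mul, map_mul _ (convComap _ _), h_fst,
      h_fst, h_mul, mul_one, mul_one] at h_tmul_one
    exact h_tmul_one.symm
  · rintro ⟨h_cocycle, h_twisted⟩ c
    rw [assocRight_of_cocycle hσ h_cocycle, h_twisted, assocLeft]

lemma associative_iff (hσ : WeakAction σ) :
    (∀ x y z, mul σ f (mul σ f x y) z = mul σ f x (mul σ f y z)) ↔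
      ∀ c, assocLeft σ f c = assocRight σ f c := by
  constructor
  · intro h_assoc c
    apply smash_injective (mulThree k H)
    ext h l m
    simpa [mul_mul_tmul, mul_tmul_mul hσ, hσ.orbit_one, convConst_one]
      using h_assoc (1 ⊗ₜ h) (1 ⊗ₜ l) (c ⊗ₜ m)
  · intro h_eq x y z
    have h_trilinear : (mul σ f).compr₂ (mul σ f) =
        (LinearMap.llcomp k _ _ _ ∘ₗ mul σ f).compl₂ (mul σ f) := by
      ext a h b l c m
      simp [mul_mul_tmul, mul_tmul_mul hσ, h_eq]
    exact congr($h_trilinear x y z)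

lemma mul_one_tmul_one (hσ : WeakAction σ) (a : A) (h : H) :
    mul σ f (a ⊗ₜ h) (1 ⊗ₜ 1) =
      smash (.id k H) (convConst k H a * convComap (tmulOne k H H) f) h := by
  have h_mul : (mulCoalgHom k H).comp (tmulOne k H H) = .id k H := by
    ext
    simp
  rw [mul_tmul_tmul, hσ.orbit_one, map_one, one_mul, ← h_mul,
    ← convComap_convConst (tmulOne k H H), ← map_mul, ← convComap_smash]
  simp

lemma one_tmul_one_mul (hσ : WeakAction σ) (b : A) (l : H) :
    mul σ f (1 ⊗ₜ 1) (b ⊗ₜ l) =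
      smash (.id k H) (convConst k H b * convComap (oneTmul k H H) f) l := by
  have h_mul : (mulCoalgHom k H).comp (oneTmul k H H) = .id k H := by
    ext
    simp
  have h_const : convComap (oneTmul k H H) (convComap (tensorFst k H H) (orbit σ b)) =
      convConst k H b := by
    ext
    simp [hσ.one_apply]
  rw [mul_tmul_tmul, convConst_one, one_mul, ← h_mul, ← h_const, ← map_mul, ← convComap_smash]
  simp

lemma unital_iff (hσ : WeakAction σ) :
    (∀ x, mul σ f (1 ⊗ₜ 1) x = x ∧ mul σ f x (1 ⊗ₜ 1) = x) ↔ Normal f := by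
  constructor
  · intro h_unit
    have h_one (h : H) : smash (.id k H) 1 h = (1 : A) ⊗ₜ[k] h := by
      rw [← convConst_one, smash_id_convConst]
    constructor <;> apply smash_injective (.id k H) <;> ext h
    · simpa [convConst_one, h_one, mul_one_tmul_one hσ] using (h_unit (1 ⊗ₜ h)).2
    · simpa [convConst_one, h_one, one_tmul_one_mul hσ] using (h_unit (1 ⊗ₜ h)).1
  · rintro ⟨h_right, h_left⟩ x
    have h_one_mul : mul σ f (1 ⊗ₜ 1) = .id := by
      ext b l
      simp [one_tmul_one_mul hσ, h_left, smash_id_convConst]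
    have h_mul_one : (mul σ f).flip (1 ⊗ₜ 1) = .id := by
      ext a h
      simp [mul_one_tmul_one hσ, h_right, smash_id_convConst]
    exact ⟨congr($h_one_mul x), congr($h_mul_one x)⟩

end CrossedMul

section Sweedler

variable {k A H : Type*} [CommRing k] [Ring A] [Algebra k A] [Ring H] [HopfAlgebra k H]
  {σ : H →ₗ[k] A →ₗ[k] A} {f : H →ₗ[k] H →ₗ[k] A} {n : H → ℕ} {c₁ c₂ : H → ℕ → H}

/-- The decomposition of `Δ(h)` provided by a Sweedler representation. -/
@[simps]
def sweedlerRepr (hrep : IsSweedlerRep k H n c₁ c₂) (h : H) : Coalgebra.Repr k h ℕ where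
  index := Finset.range (n h)
  left := c₁ h
  right := c₂ h
  eq := (hrep h).symm

variable (σ f) in
lemma crossedMul_eq_mul : crossedMul k A H σ f = mul σ (toConv (TensorProduct.lift f)) := by
  ext a h b l
  let r := ℛ k h
  let s := ℛ k l
  let q i := ℛ k (r.left i)
  have h_crossedMul : crossedMul k A H σ f (a ⊗ₜ h) (b ⊗ₜ l) = ∑ i ∈ r.index, ∑ j ∈ s.index,
      ∑ p ∈ (q i).index, (a * (σ ((q i).left p) b * f ((q i).right p) (s.left j))) ⊗ₜ[k]
        (r.right i * s.right j) := by
    simp only [crossedMul, lift.tmul, LinearMap.compl₂_apply, LinearMap.comp_apply,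
      LinearMap.llcomp_apply, curry_apply, map_tmul, ← r.eq, ← s.eq, ← (q _).eq, map_sum,
      LinearMap.lTensor_tmul, LinearMap.rTensor_tmul, LinearEquiv.coe_coe, tmul_sum, sum_tmul,
      assoc_symm_tmul, tensorTensorTensorComm_tmul, LinearMap.mul'_apply]
    exact Finset.sum_comm
  have h_mul : mul σ (toConv (TensorProduct.lift f)) (a ⊗ₜ h) (b ⊗ₜ l) = ∑ i ∈ r.index,
      ∑ j ∈ s.index, ∑ p ∈ (q i).index, (a * (σ ((q i).left p) b * f ((q i).right p) (s.left j)))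
        ⊗ₜ[k] (r.right i * s.right j) := by
    simp only [mul_tmul_tmul, smash_apply _ _ (tmulRepr r s), convConst_mul_apply, tmulRepr_left,
      tmulRepr_index, tmulRepr_right, Finset.sum_product, convComap_tensorFst_mul_tmul,
      (q _).convMul_apply, Finset.mul_sum, sum_tmul]
    rfl
  exact h_crossedMul.trans h_mul.symm

lemma weakAction_of_isWeakAction (hrep : IsSweedlerRep k H n c₁ c₂)
    (hweak : IsWeakAction k A H n c₁ c₂ σ) : WeakAction σ where
  orbit_mul a b := by
    ext h
    exact (hweak.1 h a b).trans
      ((sweedlerRepr hrep h).convMul_apply (orbit σ a) (orbit σ b)).symm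
  orbit_one := by
    ext h
    simp [hweak.2.1, Algebra.algebraMap_eq_smul_one]
  one_apply := hweak.2.2

lemma normal_iff_isNormal : Normal (toConv (TensorProduct.lift f)) ↔ IsNormal k A H f := by
  simp [Normal, IsNormal, WithConv.ext_iff, LinearMap.ext_iff, forall_and,
    Algebra.algebraMap_eq_smul_one]

lemma cocycle_iff_isCocycle (hrep : IsSweedlerRep k H n c₁ c₂) :
    Cocycle σ (toConv (TensorProduct.lift f)) ↔ IsCocycle k A H n c₁ c₂ σ f := by
  let F := toConv (TensorProduct.lift f)
  let r := sweedlerRepr hrep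
  have h_left (h l m : H) :
      (convComap (Coalgebra.TensorProduct.assoc k k H H H).toCoalgHom
        (twist σ F * convComap (idTensorMul k H) F)) ((h ⊗ₜ l) ⊗ₜ m) =
      ∑ i ∈ Finset.range (n h), ∑ j ∈ Finset.range (n l), ∑ p ∈ Finset.range (n m),
        σ (c₁ h i) (f (c₁ l j) (c₁ m p)) * f (c₂ h i) (c₂ l j * c₂ m p) := by
    refine (convMul_tmul (r h) (tmulRepr (r l) (r m)) _ _).trans ?_
    simp [r, F, idTensorMul, Finset.sum_product]
  have h_right (h l m : H) :
      (convComap (tensorFst k (H ⊗[k] H) H) F * convComap (mulTensorId k H) F) ((h ⊗ₜ l) ⊗ₜ m) =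
      ∑ i ∈ Finset.range (n h), ∑ j ∈ Finset.range (n l),
        f (c₁ h i) (c₁ l j) * f (c₂ h i * c₂ l j) m := by
    rw [convComap_tensorFst_mul_tmul, convMul_tmul (r h) (r l)]
    simp [r, F, mulTensorId]
  refine ⟨fun h_cocycle h l m => ?_, fun h_cocycle => ?_⟩
  · rw [← h_left, ← h_right, show _ = _ from h_cocycle]
  · ext h l m
    exact (h_left h l m).trans ((h_cocycle h l m).trans (h_right h l m).symm)

lemma twistedModule_iff_isTwistedModule (hrep : IsSweedlerRep k H n c₁ c₂) :
    TwistedModule σ (toConv (TensorProduct.lift f)) ↔ IsTwistedModule k A H n c₁ c₂ σ f := by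
  let F := toConv (TensorProduct.lift f)
  let r := sweedlerRepr hrep
  have h_left (h l : H) (a : A) : (twist σ (orbit σ a) * F) (h ⊗ₜ l) =
      ∑ i ∈ Finset.range (n h), ∑ j ∈ Finset.range (n l),
        σ (c₁ h i) (σ (c₁ l j) a) * f (c₂ h i) (c₂ l j) := by
    simp [convMul_tmul (r h) (r l), r, F, -LinearMap.convMul_apply]
  have h_right (h l : H) (a : A) :
      (F * convComap (Bialgebra.mulCoalgHom k H) (orbit σ a)) (h ⊗ₜ l) =
      ∑ i ∈ Finset.range (n h), ∑ j ∈ Finset.range (n l),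
        f (c₁ h i) (c₁ l j) * σ (c₂ h i * c₂ l j) a := by
    simp [convMul_tmul (r h) (r l), r, F, -LinearMap.convMul_apply]
  refine ⟨fun h_twisted h l a => ?_, fun h_twisted a => ?_⟩
  · rw [← h_left, ← h_right, h_twisted]
  · ext h l
    exact (h_left h l a).trans ((h_twisted h l a).trans (h_right h l a).symm)

end Sweedler

end CrossedProduct

end

theorem crossed_product_associative_iff_general {k A H : Type*} [CommSemiring k] [Semiring A]
    [Algebra k A] [Semiring H] [Bialgebra k H] {σ : H →ₗ[k] A →ₗ[k] A}
    {f : WithConv (H ⊗[k] H →ₗ[k] A)} (hσ : CrossedProduct.WeakAction σ) :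
    ((∀ x y z, CrossedProduct.mul σ f (CrossedProduct.mul σ f x y) z =
        CrossedProduct.mul σ f x (CrossedProduct.mul σ f y z)) ∧
      ∀ x, CrossedProduct.mul σ f (1 ⊗ₜ 1) x = x ∧ CrossedProduct.mul σ f x (1 ⊗ₜ 1) = x) ↔
    CrossedProduct.Normal f ∧ CrossedProduct.Cocycle σ f ∧ CrossedProduct.TwistedModule σ f := by
  rw [CrossedProduct.associative_iff hσ, CrossedProduct.unital_iff hσ, and_comm]
  exact and_congr_right fun hf => CrossedProduct.forall_assocLeft_eq_assocRight_iff hσ hf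

/-- Let `H` be a Hopf `k`-algebra weakly acting on a `k`-algebra `A` and
`f : H ⊗ H → A` a `k`-linear map.  The algebra `A #_f H` is associative with `1 # 1` as
identity element if and only if `f` is normal, satisfies the cocycle condition, and the
twisted module condition holds. -/
theorem crossed_product_associative_iff
    (k A H : Type*) [CommRing k] [Ring A] [Algebra k A] [Ring H] [HopfAlgebra k H]
    (σ : H →ₗ[k] A →ₗ[k] A) (f : H →ₗ[k] H →ₗ[k] A)
    (n : H → ℕ) (c₁ c₂ : H → ℕ → H)
    (hrep : IsSweedlerRep k H n c₁ c₂)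
    (hweak : IsWeakAction k A H n c₁ c₂ σ) :
    ((∀ x y z : A ⊗[k] H,
        crossedMul k A H σ f (crossedMul k A H σ f x y) z =
          crossedMul k A H σ f x (crossedMul k A H σ f y z)) ∧
      (∀ x : A ⊗[k] H,
        crossedMul k A H σ f (oneE k A H) x = x ∧
          crossedMul k A H σ f x (oneE k A H) = x)) ↔
    (IsNormal k A H f ∧ IsCocycle k A H n c₁ c₂ σ f ∧ IsTwistedModule k A H n c₁ c₂ σ f) := by
  rw [CrossedProduct.crossedMul_eq_mul, ← CrossedProduct.normal_iff_isNormal,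
    ← CrossedProduct.cocycle_iff_isCocycle hrep,
    ← CrossedProduct.twistedModule_iff_isTwistedModule hrep]
  exact crossed_product_associative_iff_general
    (CrossedProduct.weakAction_of_isWeakAction hrep hweak)
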